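/- Let A ⊆ ℝ² be a finite s-distance set with s ≥ 3 contained in the zero set of y² − f(x), where f is a cubic polynomial. Then |A| ≤ 3s. -/

import Mathlib

noncomputable section

/-- The set of nonzero distances determined by a set `A` in Euclidean space. -/
def distSet {n : ℕ} (A : Set (EuclideanSpace ℝ (Fin n))) : Set ℝ :=
  {d | ∃ p ∈ A, ∃ q ∈ A, p ≠ q ∧ dist p q = d}

theorem sdist_moments {ι : Type*} [Fintype ι] (g u v : ι → ℝ) (s : ℕ) (c0 c1 c2 c3 : ℝ)
    (hc : c3 ≠ 0)
    (hcurve : ∀ a, v a ^ 2 = c0 + c1 * u a + c2 * u a ^ 2 + c3 * u a ^ 3)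
    (h0 : ∀ i j, i ≤ 2 → i + j ≤ s → ∑ a, g a * (u a ^ i * v a ^ j) = 0) :
    ∀ i j, i + j ≤ s → ∑ a, g a * (u a ^ i * v a ^ j) = 0 := by
  intro i
  induction i using Nat.strong_induction_on with
  | _ i ih =>
    intro j hij
    by_cases hi : i ≤ 2
    · exact h0 i j hi hij
    · obtain ⟨k, rfl⟩ : ∃ k, i = k + 3 := ⟨i - 3, by omega⟩
      have e1 := ih k (by omega) (j + 2) (by omega)
      have e2 := ih k (by omega) j (by omega)
      have e3 := ih (k + 1) (by omega) j (by omega)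
      have e4 := ih (k + 2) (by omega) j (by omega)
      have key : c3 * ∑ a, g a * (u a ^ (k + 3) * v a ^ j)
          = ∑ a, g a * (u a ^ k * v a ^ (j + 2)) - c0 * ∑ a, g a * (u a ^ k * v a ^ j)
            - c1 * ∑ a, g a * (u a ^ (k + 1) * v a ^ j)
            - c2 * ∑ a, g a * (u a ^ (k + 2) * v a ^ j) := by
        simp only [Finset.mul_sum, ← Finset.sum_sub_distrib]
        refine Finset.sum_congr rfl fun a _ => ?_
        rw [pow_add (v a) j 2, hcurve a]
        ring
      rw [e1, e2, e3, e4] at key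
      simpa [hc] using key

theorem sdist_vanish {ι : Type*} [Fintype ι] (g u v : ι → ℝ) (s : ℕ)
    (h : ∀ i j, i + j ≤ s → ∑ a, g a * (u a ^ i * v a ^ j) = 0) (D : Finset ℝ) :
    ∀ i j k l, i + j + k + l + 2 * D.card ≤ 2 * s →
      ∑ a, ∑ b, g a * g b * (u a ^ i * v a ^ j * u b ^ k * v b ^ l) *
        ∏ d ∈ D, (d ^ 2 - ((u a - u b) ^ 2 + (v a - v b) ^ 2)) = 0 := by
  induction D using Finset.induction_on with
  | empty =>
    intro i j k l hs
    have : ∑ a, ∑ b, g a * g b * (u a ^ i * v a ^ j * u b ^ k * v b ^ l)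
        = (∑ a, g a * (u a ^ i * v a ^ j)) * ∑ b, g b * (u b ^ k * v b ^ l) := by
      rw [Finset.sum_mul_sum]
      refine Finset.sum_congr rfl fun a _ => Finset.sum_congr rfl fun b _ => ?_
      ring
    simp only [Finset.prod_empty, mul_one, this]
    simp only [Finset.card_empty] at hs
    by_cases hh : i + j ≤ s
    · rw [h i j hh, zero_mul]
    · rw [h k l (by omega), mul_zero]
  | insert d D hd ih =>
    intro i j k l hs
    rw [Finset.card_insert_of_notMem hd] at hs
    have e1 := ih i j k l (by omega)
    have e2 := ih (i + 2) j k l (by omega)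
    have e3 := ih (i + 1) j (k + 1) l (by omega)
    have e4 := ih i j (k + 2) l (by omega)
    have e5 := ih i (j + 2) k l (by omega)
    have e6 := ih i (j + 1) k (l + 1) (by omega)
    have e7 := ih i j k (l + 2) (by omega)
    set P : ι → ι → ℝ := fun a b => ∏ d ∈ D, (d ^ 2 - ((u a - u b) ^ 2 + (v a - v b) ^ 2)) with hP
    have key : ∑ a, ∑ b, g a * g b * (u a ^ i * v a ^ j * u b ^ k * v b ^ l) *
        ∏ d ∈ insert d D, (d ^ 2 - ((u a - u b) ^ 2 + (v a - v b) ^ 2))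
      = d ^ 2 * (∑ a, ∑ b, g a * g b * (u a ^ i * v a ^ j * u b ^ k * v b ^ l) * P a b)
        - (∑ a, ∑ b, g a * g b * (u a ^ (i + 2) * v a ^ j * u b ^ k * v b ^ l) * P a b)
        + 2 * (∑ a, ∑ b, g a * g b * (u a ^ (i + 1) * v a ^ j * u b ^ (k + 1) * v b ^ l) * P a b)
        - (∑ a, ∑ b, g a * g b * (u a ^ i * v a ^ j * u b ^ (k + 2) * v b ^ l) * P a b)
        - (∑ a, ∑ b, g a * g b * (u a ^ i * v a ^ (j + 2) * u b ^ k * v b ^ l) * P a b)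
        + 2 * (∑ a, ∑ b, g a * g b * (u a ^ i * v a ^ (j + 1) * u b ^ k * v b ^ (l + 1)) * P a b)
        - (∑ a, ∑ b, g a * g b * (u a ^ i * v a ^ j * u b ^ k * v b ^ (l + 2)) * P a b) := by
      simp only [Finset.mul_sum, ← Finset.sum_sub_distrib, ← Finset.sum_add_distrib]
      refine Finset.sum_congr rfl fun a _ => Finset.sum_congr rfl fun b _ => ?_
      rw [Finset.prod_insert hd]
      change _ * (_ * P a b) = _
      ring
    rw [key, e1, e2, e3, e4, e5, e6, e7]
    ring

/-- An `s`-distance set (`s ≥ 3`) on an elliptic curve `y² = f(x)` with `f` cubic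
has at most `3s` points. -/
theorem sdist_on_elliptic_curve {s : ℕ} (hs : 3 ≤ s) (f : Polynomial ℝ)
    (hf : f.natDegree = 3)
    (A : Finset (EuclideanSpace ℝ (Fin 2)))
    (hA : (distSet (A : Set (EuclideanSpace ℝ (Fin 2)))).ncard ≤ s)
    (hcurve : ∀ a ∈ A, (a 1) ^ 2 = f.eval (a 0)) :
    A.card ≤ 3 * s := by
  classical
  by_contra hlt
  push Not at hlt
  have hfin : (distSet (A : Set (EuclideanSpace ℝ (Fin 2)))).Finite := by
    refine ((A ×ˢ A).image fun p => dist p.1 p.2).finite_toSet.subset ?_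
    rintro d ⟨p, hp, q, hq, -, rfl⟩
    simp only [Finset.coe_image, Set.mem_image, Finset.mem_coe, Finset.mem_product]
    exact ⟨(p, q), ⟨hp, hq⟩, rfl⟩
  set D := hfin.toFinset with hD
  have hDc : D.card ≤ s := by rwa [hD, ← Set.ncard_eq_toFinset_card _ hfin]
  let u : A → ℝ := fun a => a.1 0
  let v : A → ℝ := fun a => a.1 1
  let M : Matrix (Fin (s + 1) ⊕ Fin s ⊕ Fin (s - 1)) A ℝ := Matrix.of fun r a =>
    match r with
    | .inl j => v a ^ (j : ℕ)
    | .inr (.inl j) => u a * v a ^ (j : ℕ)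
    | .inr (.inr j) => u a ^ 2 * v a ^ (j : ℕ)
  have hker : LinearMap.ker M.mulVecLin ≠ ⊥ := by
    apply LinearMap.ker_ne_bot_of_finrank_lt
    simp only [Module.finrank_fintype_fun_eq_card, Fintype.card_sum, Fintype.card_fin,
      Fintype.card_coe]
    omega
  obtain ⟨g, hg, hg0⟩ := (Submodule.ne_bot_iff _).1 hker
  have hM : ∀ r, ∑ a, M r a * g a = 0 := fun r => by
    have := congrFun (LinearMap.mem_ker.1 hg) r
    simpa [Matrix.mulVec, dotProduct] using this
  have h0 : ∀ i j, i ≤ 2 → i + j ≤ s → ∑ a, g a * (u a ^ i * v a ^ j) = 0 := by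
    intro i j hi hij
    interval_cases i
    · rw [← hM (.inl ⟨j, by omega⟩)]
      exact Finset.sum_congr rfl fun a _ => by simp [M]; ring
    · rw [← hM (.inr (.inl ⟨j, by omega⟩))]
      exact Finset.sum_congr rfl fun a _ => by simp [M]; ring
    · rw [← hM (.inr (.inr ⟨j, by omega⟩))]
      exact Finset.sum_congr rfl fun a _ => by simp [M]; ring
  have hc3 : f.coeff 3 ≠ 0 := by
    rw [← hf, Polynomial.coeff_natDegree]
    intro h
    rw [Polynomial.leadingCoeff_eq_zero] at h
    simp [h] at hf
  have hm := sdist_moments g u v s (f.coeff 0) (f.coeff 1) (f.coeff 2) (f.coeff 3) hc3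
    (fun a => by
      have := hcurve a.1 a.2
      rw [Polynomial.eval_eq_sum_range, hf] at this
      simpa [Finset.sum_range_succ] using this) h0
  have hv := sdist_vanish g u v s hm D 0 0 0 0 (by omega)
  have hdist : ∀ a b : A, dist a.1 b.1 ^ 2 = (u a - u b) ^ 2 + (v a - v b) ^ 2 := fun a b => by
    rw [EuclideanSpace.dist_eq, Real.sq_sqrt (by positivity)]
    simp [Fin.sum_univ_two, Real.dist_eq, sq_abs, u, v]
  have hdiag : ∑ a, g a ^ 2 * ∏ d ∈ D, d ^ 2 = 0 := by
    rw [← hv]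
    refine Finset.sum_congr rfl fun a _ => ?_
    rw [Finset.sum_eq_single a]
    · simp; left; ring
    · intro b _ hba
      refine mul_eq_zero_of_right _ (Finset.prod_eq_zero (i := dist a.1 b.1) ?_ ?_)
      · rw [hD, Set.Finite.mem_toFinset]
        exact ⟨a.1, a.2, b.1, b.2, fun h => hba (Subtype.ext h.symm), rfl⟩
      · rw [hdist, sub_self]
    · simp
  have hpos : 0 < ∏ d ∈ D, d ^ 2 := by
    refine Finset.prod_pos fun d hd => ?_
    rw [hD, Set.Finite.mem_toFinset] at hd
    obtain ⟨p, _, q, _, hpq, rfl⟩ := hd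
    exact pow_pos (dist_pos.2 hpq) 2
  rw [← Finset.sum_mul] at hdiag
  have hz := (mul_eq_zero.1 hdiag).resolve_right hpos.ne'
  rw [Finset.sum_eq_zero_iff_of_nonneg (fun a _ => sq_nonneg _)] at hz
  exact hg0 (funext fun a => by simpa using hz a (Finset.mem_univ a))
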